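/- Let G be a graph and k ≥ 3 an integer. Then G has a nowhere-zero k-flow if and only if there is an orientation D of G such that the function f : V(G) → ℝ defined by f(v) = (k/(k−2))·(2·d⁺_{D(G)}(v) − d_G(v)) is a balanced valuation of G, where d⁺_{D(G)}(v) is the outdegree of v in the orientation D and d_G(v) is the degree of v in G. -/

import Mathlib

open SimpleGraph

variable {V : Type*}

/-- The set of edges of `G` with exactly one end in `S`: the edge-cut `∂_G(S)`. -/
def edgeCut (G : SimpleGraph V) (S : Set V) : Set (Sym2 V) :=
  {e | e ∈ G.edgeSet ∧ ∃ a b, e = s(a, b) ∧ a ∈ S ∧ b ∉ S}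

/-- The set of edges of `G` with one end in `S` and the other end in `T`. -/
def edgesBetween (G : SimpleGraph V) (S T : Set V) : Set (Sym2 V) :=
  {e | e ∈ G.edgeSet ∧ ∃ a b, e = s(a, b) ∧ a ∈ S ∧ b ∈ T}

/-- A graph is cubic if every vertex has degree 3. -/
def IsCubic (G : SimpleGraph V) : Prop :=
  ∀ v, (G.neighborSet v).ncard = 3

/-- A graph is bridgeless if no edge is a bridge. -/
def Bridgeless (G : SimpleGraph V) : Prop :=
  ∀ e ∈ G.edgeSet, ¬ G.IsBridge e

/-- `G` has a circuit all of whose vertices lie in `S`. -/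
def HasCycleIn (G : SimpleGraph V) (S : Set V) : Prop :=
  ∃ (v : V) (p : G.Walk v v), p.IsCycle ∧ ∀ x ∈ p.support, x ∈ S

/-- `G` is cyclically `k`-edge-connected: there is no edge-cut with fewer than `k` edges
whose deletion leaves at least two components each containing a circuit. -/
def CyclicallyEdgeConnected (G : SimpleGraph V) (k : ℕ) : Prop :=
  ∀ S : Set V, HasCycleIn G S → HasCycleIn G Sᶜ → k ≤ (edgeCut G S).ncard

/-- `F` is a 2-factor of `G`: a spanning subgraph in which every vertex has degree 2. -/
def IsTwoFactor (G F : SimpleGraph V) : Prop :=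
  F ≤ G ∧ ∀ v, (F.neighborSet v).ncard = 2

/-- The number of connected components of odd cardinality (odd circuits of a 2-factor). -/
noncomputable def oddComponents (F : SimpleGraph V) : ℕ :=
  {C : F.ConnectedComponent | Odd C.supp.ncard}.ncard

/-- `G` has a nowhere-zero `k`-flow: an orientation and an assignment of values in
`{1, …, k-1}` to the edges satisfying Kirchhoff's law at every vertex, encoded as a
skew-symmetric function on ordered pairs of adjacent vertices. -/
def HasNowhereZeroFlow [Fintype V] (G : SimpleGraph V) (k : ℕ) : Prop :=
  ∃ f : V → V → ℤ,
    (∀ v w, f v w = - f w v) ∧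
    (∀ v w, G.Adj v w → f v w ≠ 0 ∧ (f v w).natAbs < k) ∧
    (∀ v w, ¬ G.Adj v w → f v w = 0) ∧
    (∀ v, ∑ w, f v w = 0)

/-- A balanced valuation of `G`. -/
def BalancedValuation (G : SimpleGraph V) (f : V → ℝ) : Prop :=
  ∀ X : Set V, |∑ᶠ v ∈ X, f v| ≤ ((edgeCut G X).ncard : ℝ)

/-- A canonical 4-edge-coloring of `G` w.r.t. the 2-factor `F`: the edges of the
complementary 1-factor get color 1; the edges of `F` get colors in {0,2,3}, properly
(adjacent edges of `F` get distinct colors, which forces the alternation of 2 and 3);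
each odd circuit of `F` carries exactly one edge of color 0, each even circuit none. -/
def IsCanonicalColoring (G F : SimpleGraph V) (c : Sym2 V → ℕ) : Prop :=
  (∀ e ∈ G.edgeSet, e ∉ F.edgeSet → c e = 1) ∧
  (∀ e ∈ F.edgeSet, c e = 0 ∨ c e = 2 ∨ c e = 3) ∧
  (∀ e ∈ F.edgeSet, ∀ f ∈ F.edgeSet, e ≠ f → (∃ v, v ∈ e ∧ v ∈ f) → c e ≠ c f) ∧
  (∀ C : F.ConnectedComponent,
    (Odd C.supp.ncard →
      {e | e ∈ F.edgeSet ∧ (∀ w ∈ e, w ∈ C.supp) ∧ c e = 0}.ncard = 1) ∧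
    (¬ Odd C.supp.ncard →
      {e | e ∈ F.edgeSet ∧ (∀ w ∈ e, w ∈ C.supp) ∧ c e = 0}.ncard = 0))

/-- The set of vertices of `G` at which color 2 is missing. -/
def missingTwo (G : SimpleGraph V) (c : Sym2 V → ℕ) : Set V :=
  {v | ∀ e ∈ G.edgeSet, v ∈ e → c e ≠ 2}

/-- The spanning subgraph of `G` induced by the edges of colors 1 and 2. -/
def colorSubgraph (G : SimpleGraph V) (c : Sym2 V → ℕ) : SimpleGraph V :=
  SimpleGraph.fromEdgeSet {e | e ∈ G.edgeSet ∧ (c e = 1 ∨ c e = 2)}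

/-- The edge type of the multigraph `M_G`: the edges of `G` together with, for each
`i ∈ {1,…,t}`, two parallel edges `f'_i = (i, false)` and `f_i = (i, true)` joining
`z_{2i-1}` and `z_{2i}`. -/
abbrev MEdge (G : SimpleGraph V) (t : ℕ) := G.edgeSet ⊕ (Fin t × Bool)

/-- Reference directions for the edges of `M_G`: `dir` is a fixed choice of direction
for each edge of `G`, and the added edge `(i, b)` is directed from `za i` to `zb i`. -/
def mEnds (G : SimpleGraph V) (dir : G.edgeSet → V × V) {t : ℕ} (za zb : Fin t → V) :
    MEdge G t → V × V
  | .inl e => dir e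
  | .inr (i, _) => (za i, zb i)

/-- Kirchhoff's law for a signed flow on a multigraph with reference directions. -/
def Conserves {E : Type*} (ends : E → V × V) (ψ : E → ℤ) : Prop :=
  ∀ v : V, ∑ᶠ e ∈ {e | (ends e).1 = v}, ψ e = ∑ᶠ e ∈ {e | (ends e).2 = v}, ψ e

/-- The decomposition data of a canonical nowhere-zero 4-flow on `M_G`:
`ψ₁` is a flow of constant absolute value 2 around the circuits of the 2-factor `F`;
`ψ₂` is a flow of constant absolute value 1 around the circuits of the 2-factor of `M_G`
induced by colors 1 and 2 (the edges `f'_i` included);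
`ψ₃` is a flow of constant absolute value 1 around each 2-circuit `{f_i, f'_i}`, directed
so that `f'_i` gets the same direction as in `ψ₂`. -/
def IsCanonicalDecomp (G F : SimpleGraph V) (c : Sym2 V → ℕ)
    (dir : G.edgeSet → V × V) {t : ℕ} (za zb : Fin t → V)
    (ψ₁ ψ₂ ψ₃ : MEdge G t → ℤ) : Prop :=
  Conserves (mEnds G dir za zb) ψ₁ ∧
  Conserves (mEnds G dir za zb) ψ₂ ∧
  Conserves (mEnds G dir za zb) ψ₃ ∧
  (∀ e : G.edgeSet, (e : Sym2 V) ∈ F.edgeSet → (ψ₁ (Sum.inl e)).natAbs = 2) ∧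
  (∀ e : G.edgeSet, (e : Sym2 V) ∉ F.edgeSet → ψ₁ (Sum.inl e) = 0) ∧
  (∀ p : Fin t × Bool, ψ₁ (Sum.inr p) = 0) ∧
  (∀ e : G.edgeSet, (c (e : Sym2 V) = 1 ∨ c (e : Sym2 V) = 2) → (ψ₂ (Sum.inl e)).natAbs = 1) ∧
  (∀ e : G.edgeSet, ¬ (c (e : Sym2 V) = 1 ∨ c (e : Sym2 V) = 2) → ψ₂ (Sum.inl e) = 0) ∧
  (∀ i : Fin t, (ψ₂ (Sum.inr (i, false))).natAbs = 1) ∧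
  (∀ i : Fin t, ψ₂ (Sum.inr (i, true)) = 0) ∧
  (∀ e : G.edgeSet, ψ₃ (Sum.inl e) = 0) ∧
  (∀ i : Fin t, ψ₃ (Sum.inr (i, false)) = ψ₂ (Sum.inr (i, false))) ∧
  (∀ i : Fin t, (ψ₃ (Sum.inr (i, true))).natAbs = 1)

/-- A canonical nowhere-zero 4-flow on `M_G` is a sum of three flows as above. -/
def IsCanonicalFourFlow (G F : SimpleGraph V) (c : Sym2 V → ℕ)
    (dir : G.edgeSet → V × V) {t : ℕ} (za zb : Fin t → V)
    (ψ : MEdge G t → ℤ) : Prop :=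
  ∃ ψ₁ ψ₂ ψ₃ : MEdge G t → ℤ,
    (∀ e, ψ e = ψ₁ e + ψ₂ e + ψ₃ e) ∧ IsCanonicalDecomp G F c dir za zb ψ₁ ψ₂ ψ₃

/-- The outdegree of `v` in the orientation `D` induced by the signed flow `ψ`. -/
noncomputable def mOutDeg {E : Type*} (ends : E → V × V) (ψ : E → ℤ) (v : V) : ℕ :=
  {e | ((ends e).1 = v ∧ 0 < ψ e) ∨ ((ends e).2 = v ∧ ψ e < 0)}.ncard

/-- The degree of `v` in the multigraph with endpoint map `ends`. -/
noncomputable def mDeg {E : Type*} (ends : E → V × V) (v : V) : ℕ :=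
  {e | (ends e).1 = v ∨ (ends e).2 = v}.ncard

/-- The class `A` (white vertices) of the flow partition induced by `ψ`. -/
def partA {E : Type*} (ends : E → V × V) (ψ : E → ℤ) : Set V :=
  {v | 2 * mOutDeg ends ψ v < mDeg ends v}

/-- The class `B` (black vertices) of the flow partition induced by `ψ`. -/
def partB {E : Type*} (ends : E → V × V) (ψ : E → ℤ) : Set V :=
  {v | mDeg ends v < 2 * mOutDeg ends ψ v}

/-- A 6-edge-cut `Ecut` is bad w.r.t. a flow partition `(A, B)`: it has exactly four
edges of color 1 and two edges of color 2, and it separates `{z1,z2,z3,z4}` into two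
pairs lying in different components of `G - Ecut`, one pair contained in `A` or in `B`. -/
def IsBadCut (G : SimpleGraph V) (c : Sym2 V → ℕ) (z1 z2 z3 z4 : V)
    (Ecut : Set (Sym2 V)) (A B : Set V) : Prop :=
  {e ∈ Ecut | c e = 1}.ncard = 4 ∧ {e ∈ Ecut | c e = 2}.ncard = 2 ∧
  ∃ p q r s : V, ({p, q, r, s} : Set V) = {z1, z2, z3, z4} ∧
    ({p, q} : Set V) ∩ {r, s} = ∅ ∧ p ≠ q ∧ r ≠ s ∧
    (G.deleteEdges Ecut).Reachable p q ∧ (G.deleteEdges Ecut).Reachable r s ∧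
    ¬ (G.deleteEdges Ecut).Reachable p r ∧
    (({p, q} : Set V) ⊆ A ∨ ({p, q} : Set V) ⊆ B)

/-!
Orient every edge along its flow value. A nowhere-zero `k`-flow positive along an orientation `D`
is then a circulation bounded above by `k - 1` on the arcs of `D` and by `-1` on the reversed arcs.
By Hoffman's circulation theorem such a circulation exists if and only if
`d⁻(X) ≤ (k - 1) d⁺(X)` for every `X`, where `d⁺(X)` and `d⁻(X)` count the arcs leaving and entering
`X`. Applied to `X` and to its complement, this is
`k |d⁺(X) - d⁻(X)| ≤ (k - 2) (d⁺(X) + d⁻(X))`; since `2 d⁺(v) - d(v) = d⁺(v) - d⁻(v)` sums over `X`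
to `d⁺(X) - d⁻(X)`, that is the balance condition.

For Hoffman's theorem, lower the capacity of an arc `ab` until it cancels that of `ba` or some cut
separating `a` from `b` becomes tight, and then treat `ba` in the same way. If tight cuts stop both
reductions, uncrossing them shows that the capacities of `ab` and `ba` cancel after all. Once
opposite capacities cancel everywhere, the capacity function is itself a circulation.
-/

section CutCapacity

variable [DecidableEq V] {M : Type*}

/-- The arc capacities `u` after lowering the capacity of the arc from `a` to `b` by `δ`. -/
def lowerArc [AddCommGroup M] (u : V → V → M) (a b : V) (δ : M) : V → V → M :=
  fun v w => u v w - if v = a ∧ w = b then δ else 0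

lemma lowerArc_le [AddCommGroup M] [PartialOrder M] [IsOrderedAddMonoid M] (u : V → V → M)
    (a b : V) {δ : M} (hδ : 0 ≤ δ) : lowerArc u a b δ ≤ u := by
  intro v w
  refine sub_le_self _ ?_
  split_ifs
  exacts [hδ, le_rfl]

variable [Fintype V]

/-- The capacity of the cut `∂X` in the direction leaving `X`, for arc capacities `u`. -/
def cutCapacity [AddCommMonoid M] (u : V → V → M) (X : Finset V) : M :=
  ∑ a ∈ X, ∑ b ∈ Xᶜ, u a b

lemma cutCapacity_swap [AddCommMonoid M] (u : V → V → M) (X : Finset V) :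
    cutCapacity (fun v w => u w v) X = cutCapacity u Xᶜ := by
  rw [cutCapacity, cutCapacity, compl_compl, Finset.sum_comm]

lemma cutCapacity_add [AddCommMonoid M] (u u' : V → V → M) (X : Finset V) :
    cutCapacity (fun v w => u v w + u' v w) X = cutCapacity u X + cutCapacity u' X := by
  simp only [cutCapacity, Finset.sum_add_distrib]

lemma cutCapacity_sub [AddCommGroup M] (u u' : V → V → M) (X : Finset V) :
    cutCapacity (fun v w => u v w - u' v w) X = cutCapacity u X - cutCapacity u' X := by
  simp only [cutCapacity, Finset.sum_sub_distrib]

lemma cutCapacity_const_mul [NonUnitalNonAssocSemiring M] (c : M) (u : V → V → M) (X : Finset V) :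
    cutCapacity (fun v w => c * u v w) X = c * cutCapacity u X := by
  simp only [cutCapacity, Finset.mul_sum]

lemma cutCapacity_mono [AddCommMonoid M] [PartialOrder M] [IsOrderedAddMonoid M]
    {u u' : V → V → M} (h : u ≤ u') (X : Finset V) : cutCapacity u X ≤ cutCapacity u' X :=
  Finset.sum_le_sum fun a _ => Finset.sum_le_sum fun b _ => h a b

lemma exists_minimum_cut [AddCommMonoid M] [LinearOrder M] (u : V → V → M) {a b : V} (hne : a ≠ b) :
    ∃ X, a ∈ X ∧ b ∉ X ∧ ∀ Y : Finset V, a ∈ Y → b ∉ Y → cutCapacity u X ≤ cutCapacity u Y := by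
  obtain ⟨X, hX, hmin⟩ := Finset.exists_min_image {X : Finset V | a ∈ X ∧ b ∉ X} (cutCapacity u)
    ⟨{a}, by simp [hne.symm]⟩
  simp only [Finset.mem_filter_univ] at hX hmin
  exact ⟨X, hX.1, hX.2, fun Y haY hbY => hmin Y ⟨haY, hbY⟩⟩

lemma sum_sum_eq_cutCapacity_of_skew [AddCommGroup M] [IsAddTorsionFree M] {f : V → V → M}
    (hf : ∀ v w, f v w = -f w v) (X : Finset V) :
    ∑ v ∈ X, ∑ w, f v w = cutCapacity f X := by
  have inside : ∑ v ∈ X, ∑ w ∈ X, f v w = 0 := by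
    rw [← self_eq_neg]
    calc ∑ v ∈ X, ∑ w ∈ X, f v w = ∑ w ∈ X, ∑ v ∈ X, f v w := Finset.sum_comm
      _ = -∑ w ∈ X, ∑ v ∈ X, f w v := by
        simp only [← Finset.sum_neg_distrib, ← hf]
  simp only [cutCapacity, ← Finset.sum_add_sum_compl X, Finset.sum_add_distrib, inside, zero_add]

lemma cutCapacity_add_cutCapacity [AddCommMonoid M] (u : V → V → M) (X Y : Finset V) :
    cutCapacity u X + cutCapacity u Y =
      cutCapacity u (X ∩ Y) + cutCapacity u (X ∪ Y) +
        ∑ a ∈ X \ Y, ∑ b ∈ Y \ X, (u a b + u b a) := by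
  have expand (s t : Finset V) (g : V → V → M) :
      ∑ a ∈ s, ∑ b ∈ t, g a b = ∑ a, ∑ b, if a ∈ s ∧ b ∈ t then g a b else 0 := by
    simp [ite_and, Finset.sum_ite_irrel]
  have reverse : ∑ a ∈ X \ Y, ∑ b ∈ Y \ X, u b a = ∑ a ∈ Y \ X, ∑ b ∈ X \ Y, u a b :=
    Finset.sum_comm
  simp only [Finset.sum_add_distrib, reverse, cutCapacity]
  rw [expand X, expand Y, expand (X ∩ Y), expand (X ∪ Y), expand (X \ Y), expand (Y \ X)]
  simp only [← Finset.sum_add_distrib]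
  refine Finset.sum_congr rfl fun a _ => Finset.sum_congr rfl fun b _ => ?_
  by_cases haX : a ∈ X <;> by_cases haY : a ∈ Y <;> by_cases hbX : b ∈ X <;>
    by_cases hbY : b ∈ Y <;> simp [haX, haY, hbX, hbY]

lemma cutCapacity_lowerArc [AddCommGroup M] (u : V → V → M) (a b : V) (δ : M) (X : Finset V) :
    cutCapacity (lowerArc u a b δ) X = cutCapacity u X - if a ∈ X ∧ b ∉ X then δ else 0 := by
  unfold lowerArc
  rw [cutCapacity_sub]
  simp [cutCapacity, ite_and, Finset.sum_ite_irrel]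

end CutCapacity

section Circulation

variable [Fintype V] {M : Type*} [AddCommGroup M]

/-- A circulation on the complete digraph on `V`: the value `f v w` is the net flow from `v`
to `w`, so that Kirchhoff's law says that the values leaving each vertex sum to zero. -/
structure IsCirculation (f : V → V → M) : Prop where
  skew : ∀ v w, f v w = -f w v
  conserved : ∀ v, ∑ w, f v w = 0

variable [DecidableEq V] [LinearOrder M] [IsOrderedAddMonoid M] {u : V → V → M}

lemma IsCirculation.cutCapacity_eq_zero {f : V → V → M} (hf : IsCirculation f) (X : Finset V) :
    cutCapacity f X = 0 := by
  rw [← sum_sum_eq_cutCapacity_of_skew hf.skew]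
  exact Finset.sum_eq_zero fun v _ => hf.conserved v

/-- Hoffman's condition on net capacities `u`. An arc with lower bound `l` and upper bound `c`
is encoded by giving it capacity `c` and its reverse capacity `-l`, so `add_swap_nonneg` says
that lower bounds do not exceed upper bounds. -/
structure IsFeasible (u : V → V → M) : Prop where
  add_swap_nonneg : ∀ v w, 0 ≤ u v w + u w v
  cutCapacity_nonneg : ∀ X, 0 ≤ cutCapacity u X

lemma IsCirculation.isFeasible_of_le {f : V → V → M} (hf : IsCirculation f) (hfu : f ≤ u) :
    IsFeasible u where
  add_swap_nonneg v w := by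
    calc 0 = f v w + f w v := by rw [hf.skew v w, neg_add_cancel]
      _ ≤ u v w + u w v := add_le_add (hfu v w) (hfu w v)
  cutCapacity_nonneg X := hf.cutCapacity_eq_zero X ▸ cutCapacity_mono hfu X

namespace IsFeasible

lemma add_swap_eq_zero_of_le {u' : V → V → M} (hu' : IsFeasible u') (hle : u' ≤ u) {a b : V}
    (h : u a b + u b a = 0) : u' a b + u' b a = 0 :=
  (h ▸ add_le_add (hle a b) (hle b a)).antisymm (hu'.add_swap_nonneg a b)

lemma add_swap_eq_zero_of_tight (hu : IsFeasible u) {a b : V} {X Y : Finset V}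
    (ha : a ∈ X \ Y) (hb : b ∈ Y \ X) (hX : cutCapacity u X = 0) (hY : cutCapacity u Y = 0) :
    u a b + u b a = 0 := by
  refine le_antisymm ?_ (hu.add_swap_nonneg a b)
  calc u a b + u b a ≤ ∑ w ∈ Y \ X, (u a w + u w a) :=
        Finset.single_le_sum (f := fun w => u a w + u w a)
          (fun w _ => hu.add_swap_nonneg a w) hb
    _ ≤ ∑ v ∈ X \ Y, ∑ w ∈ Y \ X, (u v w + u w v) :=
        Finset.single_le_sum (f := fun v => ∑ w ∈ Y \ X, (u v w + u w v))
          (fun v _ => Finset.sum_nonneg fun w _ => hu.add_swap_nonneg v w) ha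
    _ ≤ cutCapacity u X + cutCapacity u Y := by
        rw [cutCapacity_add_cutCapacity]
        exact le_add_of_nonneg_left
          (add_nonneg (hu.cutCapacity_nonneg _) (hu.cutCapacity_nonneg _))
    _ = 0 := by rw [hX, hY, add_zero]

lemma lowerArc_of_le_cutCapacity (hu : IsFeasible u) {a b : V} {δ : M}
    (hab : 0 ≤ lowerArc u a b δ a b + lowerArc u a b δ b a)
    (hcut : ∀ X : Finset V, a ∈ X → b ∉ X → δ ≤ cutCapacity u X) :
    IsFeasible (lowerArc u a b δ) where
  add_swap_nonneg v w := by
    by_cases hvw : v = a ∧ w = b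
    · simpa only [hvw.1, hvw.2] using hab
    by_cases hwv : w = a ∧ v = b
    · simpa only [hwv.1, hwv.2, add_comm] using hab
    · simpa only [lowerArc, hvw, hwv, if_false, sub_zero] using hu.add_swap_nonneg v w
  cutCapacity_nonneg X := by
    rw [cutCapacity_lowerArc, sub_nonneg]
    split_ifs with h
    · exact hcut X h.1 h.2
    · exact hu.cutCapacity_nonneg X

lemma exists_le_add_swap_eq_zero_or_tight (hu : IsFeasible u) (a b : V) :
    ∃ u' ≤ u, IsFeasible u' ∧
      (u' a b + u' b a = 0 ∨ ∃ X, a ∈ X ∧ b ∉ X ∧ cutCapacity u' X = 0) := by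
  rcases eq_or_ne a b with rfl | hne
  · have loop_nonneg : 0 ≤ u a a :=
      le_of_not_gt fun h => (add_neg h h).not_ge (hu.add_swap_nonneg a a)
    have cancel : lowerArc u a a (u a a) a a + lowerArc u a a (u a a) a a = 0 := by
      simp [lowerArc]
    exact ⟨_, lowerArc_le u a a loop_nonneg,
      hu.lowerArc_of_le_cutCapacity cancel.ge fun X h h' => absurd h h', .inl cancel⟩
  have pair (δ : M) : lowerArc u a b δ a b + lowerArc u a b δ b a = u a b + u b a - δ := by
    simp [lowerArc, hne, sub_add_eq_add_sub]
  obtain ⟨X, haX, hbX, hmin⟩ := exists_minimum_cut u hne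
  rcases le_total (u a b + u b a) (cutCapacity u X) with h | h
  · refine ⟨_, lowerArc_le u a b (hu.add_swap_nonneg a b),
      hu.lowerArc_of_le_cutCapacity ?_ fun Y haY hbY => h.trans (hmin Y haY hbY), .inl ?_⟩
    all_goals rw [pair, sub_self]
  · refine ⟨_, lowerArc_le u a b (hu.cutCapacity_nonneg X),
      hu.lowerArc_of_le_cutCapacity ?_ hmin, .inr ⟨X, haX, hbX, ?_⟩⟩
    · rwa [pair, sub_nonneg]
    · rw [cutCapacity_lowerArc, if_pos ⟨haX, hbX⟩, sub_self]

lemma exists_le_add_swap_eq_zero (hu : IsFeasible u) (a b : V) :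
    ∃ u' ≤ u, IsFeasible u' ∧ u' a b + u' b a = 0 := by
  obtain ⟨u₁, hle₁, hu₁, hab | ⟨X, haX, hbX, hX⟩⟩ := hu.exists_le_add_swap_eq_zero_or_tight a b
  · exact ⟨u₁, hle₁, hu₁, hab⟩
  obtain ⟨u₂, hle₂, hu₂, hba | ⟨Y, hbY, haY, hY⟩⟩ := hu₁.exists_le_add_swap_eq_zero_or_tight b a
  · exact ⟨u₂, hle₂.trans hle₁, hu₂, add_comm (u₂ b a) _ ▸ hba⟩
  have hX₂ : cutCapacity u₂ X = 0 :=
    (hX ▸ cutCapacity_mono hle₂ X).antisymm (hu₂.cutCapacity_nonneg X)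
  exact ⟨u₂, hle₂.trans hle₁, hu₂, hu₂.add_swap_eq_zero_of_tight
    (Finset.mem_sdiff.2 ⟨haX, haY⟩) (Finset.mem_sdiff.2 ⟨hbY, hbX⟩) hX₂ hY⟩

lemma exists_le_skew (hu : IsFeasible u) :
    ∃ u' ≤ u, IsFeasible u' ∧ ∀ v w, u' v w = -u' w v := by
  have saturate (s : Finset (V × V)) :
      ∃ u' ≤ u, IsFeasible u' ∧ ∀ p ∈ s, u' p.1 p.2 + u' p.2 p.1 = 0 := by
    induction s using Finset.induction with
    | empty => exact ⟨u, le_rfl, hu, by simp⟩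
    | insert p s _ ih =>
      obtain ⟨u₁, hle₁, hu₁, hs⟩ := ih
      obtain ⟨u₂, hle₂, hu₂, hp⟩ := hu₁.exists_le_add_swap_eq_zero p.1 p.2
      refine ⟨u₂, hle₂.trans hle₁, hu₂, Finset.forall_mem_insert .. |>.2 ⟨hp, fun q hq => ?_⟩⟩
      exact hu₂.add_swap_eq_zero_of_le hle₂ (hs q hq)
  obtain ⟨u', hle, hu', h⟩ := saturate Finset.univ
  exact ⟨u', hle, hu', fun v w => eq_neg_of_add_eq_zero_left (h (v, w) (Finset.mem_univ _))⟩

lemma isCirculation_of_skew (hu : IsFeasible u) (hskew : ∀ v w, u v w = -u w v) :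
    IsCirculation u where
  skew := hskew
  conserved := by
    have outflow_nonneg (v : V) : 0 ≤ ∑ w, u v w := by
      simpa only [← sum_sum_eq_cutCapacity_of_skew hskew, Finset.sum_singleton] using
        hu.cutCapacity_nonneg {v}
    have total : ∑ v, ∑ w, u v w = 0 := by
      rw [sum_sum_eq_cutCapacity_of_skew hskew]
      simp [cutCapacity]
    simpa [Finset.sum_eq_zero_iff_of_nonneg fun v _ => outflow_nonneg v] using total

end IsFeasible

theorem exists_isCirculation_le_iff : (∃ f ≤ u, IsCirculation f) ↔ IsFeasible u := by
  refine ⟨fun ⟨f, hfu, hf⟩ => hf.isFeasible_of_le hfu, fun hu => ?_⟩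
  obtain ⟨f, hfu, hf, hskew⟩ := hu.exists_le_skew
  exact ⟨f, hfu, hf.isCirculation_of_skew hskew⟩

end Circulation

section Orientation

variable {G : SimpleGraph V} {D : V → V → Prop}

/-- The relation `D` is the arc relation of an orientation of `G`. -/
structure IsOrientation (G : SimpleGraph V) (D : V → V → Prop) : Prop where
  adj : ∀ v w, D v w → G.Adj v w
  iff_not_swap : ∀ v w, G.Adj v w → (D v w ↔ ¬D w v)

open Classical in
/-- The indicator function of a relation, so that `cutCapacity (relIndicator D) X` counts the arcs
of `D` leaving `X`. -/
noncomputable def relIndicator (D : V → V → Prop) (v w : V) : ℤ :=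
  if D v w then 1 else 0

lemma relIndicator_nonneg (D : V → V → Prop) (v w : V) : 0 ≤ relIndicator D v w := by
  unfold relIndicator
  split_ifs <;> decide

/-- The net capacities of a flow with values in `{1, …, k - 1}` along `D`: at most `k - 1` on the
arcs of `D`, at most `-1` on the reversed arcs, and zero elsewhere. -/
noncomputable def flowCapacity (k : ℕ) (D : V → V → Prop) (v w : V) : ℤ :=
  (k - 1) * relIndicator D v w - relIndicator D w v

lemma IsOrientation.relIndicator_add_swap (hD : IsOrientation G D) (v w : V) :
    relIndicator D v w + relIndicator D w v = relIndicator G.Adj v w := by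
  have := hD.adj v w
  have := fun h => (hD.adj w v h).symm
  have := hD.iff_not_swap v w
  unfold relIndicator
  grind

lemma IsOrientation.flowCapacity_add_swap (hD : IsOrientation G D) (k : ℕ) (v w : V) :
    flowCapacity k D v w + flowCapacity k D w v = (k - 2) * relIndicator G.Adj v w := by
  rw [← hD.relIndicator_add_swap, flowCapacity, flowCapacity]
  ring

lemma IsOrientation.flowCapacity_of_arc (hD : IsOrientation G D) (k : ℕ) {v w : V} (h : D v w) :
    flowCapacity k D v w = k - 1 := by
  simp [flowCapacity, relIndicator, h, (hD.iff_not_swap v w (hD.adj v w h)).1 h]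

lemma IsOrientation.flowCapacity_of_reverse_arc (hD : IsOrientation G D) (k : ℕ) {v w : V}
    (h : D w v) : flowCapacity k D v w = -1 := by
  simp [flowCapacity, relIndicator, h, (hD.iff_not_swap w v (hD.adj w v h)).1 h]

lemma IsOrientation.flowCapacity_of_not_adj (hD : IsOrientation G D) (k : ℕ) {v w : V}
    (h : ¬G.Adj v w) : flowCapacity k D v w = 0 := by
  simp [flowCapacity, relIndicator, mt (hD.adj v w) h, mt (hD.adj w v) (mt Adj.symm h)]

lemma IsOrientation.arc_or_reverse_arc (hD : IsOrientation G D) {v w : V} (h : G.Adj v w) :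
    D v w ∨ D w v := by
  have := hD.iff_not_swap v w h
  tauto

lemma isOrientation_pos_of_flow {f : V → V → ℤ} (hskew : ∀ v w, f v w = -f w v)
    (hne : ∀ v w, G.Adj v w → f v w ≠ 0) (hzero : ∀ v w, ¬G.Adj v w → f v w = 0) :
    IsOrientation G (fun v w => 0 < f v w) where
  adj v w h := not_imp_comm.1 (hzero v w) h.ne'
  iff_not_swap v w h := by
    have := hne v w h
    have := hskew v w
    omega

lemma balancedValuation_iff_finset [Finite V] (f : V → ℝ) :
    BalancedValuation G f ↔ ∀ X : Finset V, |∑ v ∈ X, f v| ≤ (edgeCut G X).ncard := by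
  refine ⟨fun h X => ?_, fun h X => ?_⟩
  · simpa only [finsum_mem_coe_finset] using h X
  · lift X to Finset V using X.toFinite
    simpa only [finsum_mem_coe_finset] using h X

lemma abs_div_sub_two_mul_sub_le_add_iff {K : Type*} [Field K] [LinearOrder K]
    [IsStrictOrderedRing K] {c : K} (hc : 2 < c) (p q : K) :
    |c / (c - 2) * (p - q)| ≤ p + q ↔ 0 ≤ (c - 1) * p - q ∧ 0 ≤ (c - 1) * q - p := by
  have hc' : 0 < c - 2 := sub_pos.2 hc
  rw [abs_le, div_mul_eq_mul_div, le_div_iff₀ hc', div_le_iff₀ hc']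
  constructor <;> rintro ⟨h, h'⟩ <;> constructor <;> linarith

variable [Fintype V]

lemma hasNowhereZeroFlow_iff_exists_isOrientation (k : ℕ) :
    HasNowhereZeroFlow G k ↔
      ∃ D, IsOrientation G D ∧ ∃ f ≤ flowCapacity k D, IsCirculation f := by
  constructor
  · rintro ⟨f, hskew, hbound, hzero, hcons⟩
    have hD := isOrientation_pos_of_flow hskew (fun v w h => (hbound v w h).1) hzero
    refine ⟨_, hD, f, fun v w => ?_, hskew, hcons⟩
    change f v w ≤ _
    by_cases hadj : G.Adj v w
    · rcases hD.arc_or_reverse_arc hadj with h | h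
      · have := (hbound v w hadj).2
        rw [hD.flowCapacity_of_arc k h]
        omega
      · have := hskew v w
        rw [hD.flowCapacity_of_reverse_arc k h]
        omega
    · rw [hD.flowCapacity_of_not_adj k hadj, hzero v w hadj]
  · rintro ⟨D, hD, f, hle, hf⟩
    refine ⟨f, hf.skew, fun v w hadj => ?_, fun v w hadj => ?_, hf.conserved⟩
    all_goals
      have hvw : f v w ≤ flowCapacity k D v w := hle v w
      have hwv : f w v ≤ flowCapacity k D w v := hle w v
      have hskew := hf.skew v w
    · rcases hD.arc_or_reverse_arc hadj with h | h
      · rw [hD.flowCapacity_of_arc k h] at hvw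
        rw [hD.flowCapacity_of_reverse_arc k h] at hwv
        omega
      · rw [hD.flowCapacity_of_reverse_arc k h] at hvw
        rw [hD.flowCapacity_of_arc k h] at hwv
        omega
    · simp only [hD.flowCapacity_of_not_adj k hadj,
        hD.flowCapacity_of_not_adj k (mt Adj.symm hadj)] at hvw hwv
      omega

lemma ncard_setOf_eq_sum_relIndicator (D : V → V → Prop) (v : V) :
    ({w | D v w}.ncard : ℤ) = ∑ w, relIndicator D v w := by
  classical
  simp [relIndicator, Set.ncard_eq_toFinset_card']

lemma IsOrientation.two_mul_outdegree_sub_degree (hD : IsOrientation G D) (v : V) :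
    2 * ({w | D v w}.ncard : ℤ) - (G.neighborSet v).ncard =
      ∑ w, (relIndicator D v w - relIndicator D w v) := by
  change 2 * ({w | D v w}.ncard : ℤ) - {w | G.Adj v w}.ncard = _
  simp only [ncard_setOf_eq_sum_relIndicator, ← hD.relIndicator_add_swap, Finset.sum_add_distrib,
    Finset.sum_sub_distrib]
  ring

variable [DecidableEq V]

lemma cutCapacity_flowCapacity (k : ℕ) (D : V → V → Prop) (X : Finset V) :
    cutCapacity (flowCapacity k D) X =
      (k - 1) * cutCapacity (relIndicator D) X - cutCapacity (relIndicator D) Xᶜ := by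
  unfold flowCapacity
  rw [cutCapacity_sub, cutCapacity_const_mul, cutCapacity_swap (relIndicator D)]

lemma ncard_edgeCut_eq_cutCapacity (G : SimpleGraph V) (X : Finset V) :
    ((edgeCut G X).ncard : ℤ) = cutCapacity (relIndicator G.Adj) X := by
  classical
  have edgeCut_eq : edgeCut G X = (fun p : V × V => s(p.1, p.2)) '' G.interedges X Xᶜ := by
    ext e
    simp only [edgeCut, Set.mem_image, Finset.mem_coe, mem_interedges_iff, Finset.mem_compl,
      Prod.exists]
    constructor
    · rintro ⟨h, a, b, rfl, ha, hb⟩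
      exact ⟨a, b, ⟨ha, hb, h⟩, rfl⟩
    · rintro ⟨a, b, ⟨ha, hb, h⟩, rfl⟩
      exact ⟨h, a, b, rfl, ha, hb⟩
  have inj : Set.InjOn (fun p : V × V => s(p.1, p.2)) (G.interedges X Xᶜ) := by
    rintro ⟨a, b⟩ hab ⟨c, d⟩ hcd h
    simp only [Finset.mem_coe, mem_interedges_iff, Finset.mem_compl] at hab hcd
    rcases Sym2.eq_iff.1 h with ⟨rfl, rfl⟩ | ⟨rfl, rfl⟩
    · rfl
    · exact absurd hab.1 hcd.2.1
  rw [edgeCut_eq, inj.ncard_image, Set.ncard_coe_finset, SimpleGraph.interedges,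
    Rel.interedges, Finset.card_filter, Finset.sum_product]
  simp [cutCapacity, relIndicator]

lemma IsOrientation.ncard_edgeCut (hD : IsOrientation G D) (X : Finset V) :
    ((edgeCut G X).ncard : ℤ) =
      cutCapacity (relIndicator D) X + cutCapacity (relIndicator D) Xᶜ := by
  rw [ncard_edgeCut_eq_cutCapacity, ← cutCapacity_swap, ← cutCapacity_add]
  simp only [hD.relIndicator_add_swap]

lemma IsOrientation.sum_two_mul_outdegree_sub_degree (hD : IsOrientation G D) (X : Finset V) :
    ∑ v ∈ X, (2 * ({w | D v w}.ncard : ℤ) - (G.neighborSet v).ncard) =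
      cutCapacity (relIndicator D) X - cutCapacity (relIndicator D) Xᶜ := by
  simp only [hD.two_mul_outdegree_sub_degree]
  rw [sum_sum_eq_cutCapacity_of_skew fun v w => (neg_sub _ _).symm, cutCapacity_sub,
    cutCapacity_swap (relIndicator D)]

lemma IsOrientation.abs_sum_le_ncard_edgeCut_iff (hD : IsOrientation G D) {k : ℕ} (hk : 3 ≤ k)
    (X : Finset V) :
    |∑ v ∈ X, (k : ℝ) / (k - 2) * (2 * ({w | D v w}.ncard : ℝ) - (G.neighborSet v).ncard)| ≤
        (edgeCut G X).ncard ↔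
      0 ≤ cutCapacity (flowCapacity k D) X ∧ 0 ≤ cutCapacity (flowCapacity k D) Xᶜ := by
  have cut := hD.ncard_edgeCut X
  have excess := hD.sum_two_mul_outdegree_sub_degree X
  rw [← Finset.mul_sum, cutCapacity_flowCapacity, cutCapacity_flowCapacity, compl_compl]
  rify at cut excess ⊢
  rw [cut, excess]
  exact abs_div_sub_two_mul_sub_le_add_iff (by exact_mod_cast hk) _ _

lemma IsOrientation.balancedValuation_iff (hD : IsOrientation G D) {k : ℕ} (hk : 3 ≤ k) :
    BalancedValuation G (fun v =>
        (k : ℝ) / (k - 2) * (2 * ({w | D v w}.ncard : ℝ) - (G.neighborSet v).ncard)) ↔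
      IsFeasible (flowCapacity k D) := by
  simp only [balancedValuation_iff_finset, hD.abs_sum_le_ncard_edgeCut_iff hk]
  refine ⟨fun h => ⟨fun v w => ?_, fun X => (h X).1⟩,
    fun h X => ⟨h.cutCapacity_nonneg X, h.cutCapacity_nonneg Xᶜ⟩⟩
  rw [hD.flowCapacity_add_swap]
  exact mul_nonneg (by omega) (relIndicator_nonneg _ v w)

end Orientation

/-- Jaeger: `G` has a nowhere-zero `k`-flow iff there is an orientation `D`
of `G` such that `v ↦ (k/(k-2))·(2·d⁺_D(v) − d_G(v))` is a balanced valuation of `G`. -/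
theorem statement1 [Fintype V] (G : SimpleGraph V) (k : ℕ) (hk : 3 ≤ k) :
    HasNowhereZeroFlow G k ↔
      ∃ D : V → V → Prop,
        (∀ v w, D v w → G.Adj v w) ∧
        (∀ v w, G.Adj v w → (D v w ↔ ¬ D w v)) ∧
        BalancedValuation G (fun v =>
          ((k : ℝ) / ((k : ℝ) - 2)) *
            (2 * ({w | D v w}.ncard : ℝ) - ((G.neighborSet v).ncard : ℝ))) := by
  classical
  calc HasNowhereZeroFlow G k
      ↔ ∃ D, IsOrientation G D ∧ ∃ f ≤ flowCapacity k D, IsCirculation f :=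
        hasNowhereZeroFlow_iff_exists_isOrientation k
    _ ↔ ∃ D, IsOrientation G D ∧ IsFeasible (flowCapacity k D) := by
        simp only [exists_isCirculation_le_iff]
    _ ↔ _ := exists_congr fun D =>
        ⟨fun ⟨hD, hfeas⟩ => ⟨hD.adj, hD.iff_not_swap, (hD.balancedValuation_iff hk).2 hfeas⟩,
          fun ⟨hadj, hswap, hbal⟩ =>
            ⟨⟨hadj, hswap⟩, (IsOrientation.balancedValuation_iff ⟨hadj, hswap⟩ hk).1 hbal⟩⟩
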